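/- For every λ ∈ ℂ with Im λ > 0 and every ξ ∈ ℝ, the integral ∫₀^∞ b_λ(t) φ_ξ(t) Δ(t) dt converges absolutely and equals 1/(ξ² − λ²). (This is the statement that the spherical transform of b_λ is ξ ↦ 1/(ξ² − λ²).) -/

import Mathlib

open Complex MeasureTheory Set

noncomputable section

/-- Gauss hypergeometric function ₂F₁ as a power series sum. -/
def hyp (a b c x : ℂ) : ℂ :=
  ∑' n : ℕ, (ascPochhammer ℂ n).eval a * (ascPochhammer ℂ n).eval b /
    ((ascPochhammer ℂ n).eval c * (n.factorial : ℂ)) * x ^ n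

/-- ρ = (m₁ + 2 m₂)/2 -/
def rho (m₁ m₂ : ℕ) : ℝ := ((m₁ : ℝ) + 2 * m₂) / 2

/-- Δ(t) = (2 sinh t)^(m₁+m₂) (2 cosh t)^(m₂) -/
def Del (m₁ m₂ : ℕ) (t : ℝ) : ℝ :=
  (2 * Real.sinh t) ^ (m₁ + m₂) * (2 * Real.cosh t) ^ m₂

/-- The solution Φ_λ. -/
def Phi (m₁ m₂ : ℕ) (l : ℂ) (t : ℝ) : ℂ :=
  ((2 * Real.cosh t : ℝ) : ℂ) ^ (Complex.I * l - (rho m₁ m₂ : ℂ)) *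
    hyp (((rho m₁ m₂ : ℂ) - Complex.I * l) / 2) (((m₁ : ℂ) + 2) / 4 - Complex.I * l / 2)
      (1 - Complex.I * l) ((((Real.cosh t) ^ 2 : ℝ) : ℂ))⁻¹

/-- The function b_λ. -/
def bfun (m₁ m₂ : ℕ) (l : ℂ) (t : ℝ) : ℂ :=
  (2 : ℂ) ^ (-(rho m₁ m₂ : ℂ) - 1 - Complex.I * l) *
    (Complex.Gamma (((rho m₁ m₂ : ℂ) - Complex.I * l) / 2) *
      Complex.Gamma (((m₁ : ℂ) + 2) / 4 - Complex.I * l / 2) /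
      (Complex.Gamma (((m₁ : ℂ) + (m₂ : ℂ) + 1) / 2) * Complex.Gamma (1 - Complex.I * l))) *
    Phi m₁ m₂ l t

/-- The elementary spherical function φ_λ. -/
def sph (m₁ m₂ : ℕ) (l : ℂ) (t : ℝ) : ℂ :=
  ((Real.cosh t : ℝ) : ℂ) ^ (-((rho m₁ m₂ : ℂ) + Complex.I * l)) *
    hyp (((m₁ : ℂ) + 2) / 4 + Complex.I * l / 2) (((rho m₁ m₂ : ℂ) + Complex.I * l) / 2)
      (((m₁ : ℂ) + (m₂ : ℂ) + 1) / 2) (((Real.tanh t) ^ 2 : ℝ) : ℂ)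

/-!
In the coordinate `y = tanh² t` the integrand becomes a constant times
`F(b + t, a + t; 1 + s + t; 1 - y) F(a, b; c; y) y ^ (c - 1) (1 - y) ^ (s - 1)` with
`a + b + t = s + c` and `4 s t = ξ² - l²`. Expanding only the first factor in powers of `1 - y`
leaves Euler integrals `∫ F(a, b; c; y) y ^ (c - 1) (1 - y) ^ (s + n - 1) dy`. A second termwise
integration evaluates each of them by Gauss's theorem as a quotient of Gamma functions, whose
Pochhammer symbols cancel the numerators of the first expansion. What remains is the series
`F(s, t; 1 + s + t; 1)`, again summed by Gauss's theorem; its value carries the factor `1 / (s t)`.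

Both termwise integrations are dominated: the coefficients of `F(a, b; c; ·)` grow like
`n ^ (Re (a + b - c) - 1)`, so `|F(a, b; c; x)| ≤ C (1 - x) ^ (-d)` for every positive
`d ≥ Re (a + b - c)`. The same growth rate proves Gauss's theorem: the contiguity relation
`c → c + 1` telescopes to a product of Gamma quotients, because `F(a, b; c + n; 1) → 1`.
-/

open Filter Topology Asymptotics

/-- The Taylor coefficient `(a)ₙ (b)ₙ / ((c)ₙ n!)` of `hyp a b c`. -/
def hypCoeff (a b c : ℂ) (n : ℕ) : ℂ :=
  (ascPochhammer ℂ n).eval a * (ascPochhammer ℂ n).eval b /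
    ((ascPochhammer ℂ n).eval c * (n.factorial : ℂ))

/-! ### Growth of Pochhammer symbols -/

theorem ne_neg_natCast_of_re_pos {a : ℂ} (ha : 0 < a.re) (k : ℕ) : a ≠ -k := by
  rintro rfl
  exact (k.cast_nonneg (α := ℝ)).not_gt (by simpa using ha)

theorem ascPochhammer_eval_ne_zero {a : ℂ} (ha : ∀ k : ℕ, a ≠ -k) (n : ℕ) :
    (ascPochhammer ℂ n).eval a ≠ 0 := by
  rw [Ne, ascPochhammer_eval_eq_zero_iff]
  rintro ⟨k, -, hk⟩
  exact ha k (neg_eq_iff_eq_neg.1 hk.symm)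

theorem Gamma_add_natCast {a : ℂ} (ha : ∀ k : ℕ, a ≠ -k) (n : ℕ) :
    Gamma (a + n) = (ascPochhammer ℂ n).eval a * Gamma a := by
  rw [← Gamma_add_nat_div_Gamma_eq a ha, div_mul_cancel₀ _ (Gamma_ne_zero ha)]

theorem ascPochhammer_eval_ofReal (d : ℝ) (n : ℕ) :
    (ascPochhammer ℂ n).eval (d : ℂ) = (((ascPochhammer ℝ n).eval d : ℝ) : ℂ) := by
  rw [← ascPochhammer_map (algebraMap ℝ ℂ) n]
  exact Polynomial.eval_map_apply (algebraMap ℝ ℂ) d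

theorem ascPochhammer_eval_eq_prod_range (a : ℂ) (n : ℕ) :
    (ascPochhammer ℂ n).eval a = ∏ j ∈ Finset.range n, (a + j) := by
  induction n with
  | zero => simp
  | succ n ih => rw [ascPochhammer_succ_eval, ih, Finset.prod_range_succ]

theorem GammaSeq_eq_div_ascPochhammer (a : ℂ) (n : ℕ) :
    GammaSeq a n = (n : ℂ) ^ a * n.factorial / ((ascPochhammer ℂ n).eval a * (a + n)) := by
  rw [GammaSeq, Finset.prod_range_succ, ← ascPochhammer_eval_eq_prod_range]

theorem tendsto_cpow_mul_factorial_div_ascPochhammer (a : ℂ) :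
    Tendsto (fun n : ℕ => (n : ℂ) ^ (a - 1) * n.factorial / (ascPochhammer ℂ n).eval a)
      atTop (𝓝 (Gamma a)) := by
  have hratio : Tendsto (fun n : ℕ => (a + n) / (n : ℂ)) atTop (𝓝 1) := by
    simpa using tendsto_add_mul_div_add_mul_atTop_nhds a 0 1 (one_ne_zero (α := ℂ))
  have hprod := (GammaSeq_tendsto_Gamma a).mul hratio
  rw [mul_one] at hprod
  refine hprod.congr' ?_
  filter_upwards [hratio.eventually_ne one_ne_zero] with n hn
  obtain ⟨han, hn⟩ := div_ne_zero_iff.1 hn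
  rw [GammaSeq_eq_div_ascPochhammer, cpow_sub _ _ hn, cpow_one]
  field_simp

theorem tendsto_ascPochhammer_div_cpow_mul_factorial (a : ℂ) :
    Tendsto (fun n : ℕ => (ascPochhammer ℂ n).eval a / ((n : ℂ) ^ (a - 1) * n.factorial))
      atTop (𝓝 (Gamma a)⁻¹) := by
  by_cases ha : Gamma a = 0
  · obtain ⟨m, rfl⟩ := (Gamma_eq_zero_iff a).1 ha
    rw [ha, inv_zero]
    refine tendsto_const_nhds.congr' ?_
    filter_upwards [eventually_gt_atTop m] with n hn
    rw [(ascPochhammer_eval_eq_zero_iff n (-m : ℂ)).2 ⟨m, hn, (neg_neg _).symm⟩, zero_div]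
  · simpa only [inv_div] using (tendsto_cpow_mul_factorial_div_ascPochhammer a).inv₀ ha

theorem tendsto_cpow_mul_ascPochhammer_ratio (a b c d : ℂ) :
    Tendsto (fun n : ℕ => (n : ℂ) ^ (c + d - a - b) *
        ((ascPochhammer ℂ n).eval a * (ascPochhammer ℂ n).eval b /
          ((ascPochhammer ℂ n).eval c * (ascPochhammer ℂ n).eval d)))
      atTop (𝓝 (Gamma c * Gamma d / (Gamma a * Gamma b))) := by
  have h := ((tendsto_cpow_mul_factorial_div_ascPochhammer c).mul
    (tendsto_cpow_mul_factorial_div_ascPochhammer d)).mul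
    ((tendsto_ascPochhammer_div_cpow_mul_factorial a).mul
    (tendsto_ascPochhammer_div_cpow_mul_factorial b))
  rw [← mul_inv, ← div_eq_mul_inv] at h
  refine h.congr' ?_
  filter_upwards [eventually_ne_atTop 0] with n hn
  have hn : (n : ℂ) ≠ 0 := Nat.cast_ne_zero.2 hn
  have hfac : (n.factorial : ℂ) ≠ 0 := Nat.cast_ne_zero.2 n.factorial_ne_zero
  have hpow : ∀ z : ℂ, (n : ℂ) ^ z ≠ 0 := fun z => by simp [cpow_eq_zero_iff, hn]
  simp only [cpow_sub _ _ hn, cpow_add _ _ hn, cpow_one]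
  field_simp [hpow a, hpow b]

theorem isBigO_ascPochhammer_ratio (a b c d : ℂ) :
    (fun n : ℕ => (ascPochhammer ℂ n).eval a * (ascPochhammer ℂ n).eval b /
        ((ascPochhammer ℂ n).eval c * (ascPochhammer ℂ n).eval d))
      =O[atTop] fun n : ℕ => (n : ℝ) ^ (a + b - c - d).re := by
  have hpow : (fun n : ℕ => (n : ℂ) ^ (a + b - c - d))
      =O[atTop] fun n : ℕ => ‖(n : ℂ) ^ (a + b - c - d)‖ := (isBigO_refl _ _).norm_right
  refine (hpow.mul ((tendsto_cpow_mul_ascPochhammer_ratio a b c d).isBigO_one ℝ)).congr' ?_ ?_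
  · filter_upwards [eventually_ne_atTop 0] with n hn
    rw [← mul_assoc, ← cpow_add _ _ (Nat.cast_ne_zero.2 hn),
      show a + b - c - d + (c + d - a - b) = 0 by ring, cpow_zero, one_mul]
  · filter_upwards [eventually_gt_atTop 0] with n hn
    rw [norm_natCast_cpow_of_pos hn, mul_one]

theorem isBigO_hypCoeff (a b c : ℂ) :
    hypCoeff a b c =O[atTop] fun n : ℕ => (n : ℝ) ^ (-(c - a - b).re - 1) := by
  convert isBigO_ascPochhammer_ratio a b c 1 using 3 with n
  · rw [hypCoeff, ascPochhammer_eval_one]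
  · simp only [add_re, sub_re, one_re]
    ring

theorem exists_norm_hypCoeff_le {a b c : ℂ} {d : ℝ} (hd : 0 < d) (h : (a + b - c).re ≤ d) :
    ∃ C : ℝ, ∀ n : ℕ,
      ‖hypCoeff a b c n‖ ≤ C * ((ascPochhammer ℝ n).eval d / n.factorial) := by
  have hO : (fun n : ℕ => (ascPochhammer ℂ n).eval a * (ascPochhammer ℂ n).eval b /
      ((ascPochhammer ℂ n).eval c * (ascPochhammer ℂ n).eval (d : ℂ)))
      =O[atTop] fun _ : ℕ => (1 : ℝ) := by
    refine (isBigO_ascPochhammer_ratio a b c d).trans (.of_norm_eventuallyLE ?_)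
    filter_upwards [eventually_ge_atTop 1] with n hn
    rw [Real.norm_of_nonneg (by positivity)]
    refine Real.rpow_le_one_of_one_le_of_nonpos (Nat.one_le_cast.2 hn) ?_
    rwa [sub_re, ofReal_re, sub_nonpos]
  obtain ⟨C, -, hC⟩ := bound_of_isBigO_nat_atTop hO
  refine ⟨C, fun n => ?_⟩
  have hpos : 0 < (ascPochhammer ℝ n).eval d := ascPochhammer_pos n d hd
  have hd₀ : (((ascPochhammer ℝ n).eval d : ℝ) : ℂ) ≠ 0 := ofReal_ne_zero.2 hpos.ne'
  calc ‖hypCoeff a b c n‖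
      = ‖(ascPochhammer ℂ n).eval a * (ascPochhammer ℂ n).eval b /
          ((ascPochhammer ℂ n).eval c * (ascPochhammer ℂ n).eval (d : ℂ)) *
            (((ascPochhammer ℝ n).eval d / n.factorial : ℝ) : ℂ)‖ := by
        rw [hypCoeff, ascPochhammer_eval_ofReal, ofReal_div, ofReal_natCast, div_mul_div_comm,
          mul_right_comm _ _ (n.factorial : ℂ), mul_div_mul_right _ _ hd₀]
    _ ≤ C * ((ascPochhammer ℝ n).eval d / n.factorial) := by
        rw [norm_mul, norm_real, Real.norm_of_nonneg (by positivity)]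
        gcongr
        simpa using hC (x := n) one_ne_zero

/-! ### Gauss's summation theorem -/

theorem summable_hypCoeff {a b c : ℂ} (h : 0 < (c - a - b).re) : Summable (hypCoeff a b c) :=
  summable_of_isBigO_nat (Real.summable_nat_rpow.2 (by linarith)) (isBigO_hypCoeff a b c)

theorem tendsto_natCast_mul_hypCoeff {a b c : ℂ} (h : 0 < (c - a - b).re) :
    Tendsto (fun n : ℕ => n * hypCoeff a b c n) atTop (𝓝 0) := by
  have hcast : (fun n : ℕ => (n : ℂ)) =O[atTop] fun n : ℕ => (n : ℝ) :=
    .of_norm_le fun n => (norm_natCast n).le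
  refine (hcast.mul (isBigO_hypCoeff a b c)).trans_tendsto ?_
  refine ((tendsto_rpow_neg_atTop h).comp tendsto_natCast_atTop_atTop).congr' ?_
  filter_upwards [eventually_gt_atTop 0] with n hn
  have hn : (0 : ℝ) < n := Nat.cast_pos.2 hn
  rw [Function.comp_apply, Real.rpow_sub_one hn.ne', mul_div_cancel₀ _ hn.ne']

theorem ascPochhammer_eval_mul_add_natCast (c : ℂ) (n : ℕ) :
    (ascPochhammer ℂ n).eval c * (c + n) = c * (ascPochhammer ℂ n).eval (c + 1) := by
  rw [← ascPochhammer_succ_eval, ascPochhammer_succ_left]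
  simp

theorem hypCoeff_contiguous (a b : ℂ) {c : ℂ} (hc : ∀ k : ℕ, c ≠ -k) (n : ℕ) :
    (c - a - b) * hypCoeff a b c n - (c - a) * (c - b) / c * hypCoeff a b (c + 1) n =
      n * hypCoeff a b c n - (n + 1 : ℕ) * hypCoeff a b c (n + 1) := by
  have hc₀ : c ≠ 0 := by simpa using hc 0
  have hcn : c + n ≠ 0 := fun h => hc n (eq_neg_of_add_eq_zero_left h)
  have hfac : (n.factorial : ℂ) ≠ 0 := Nat.cast_ne_zero.2 n.factorial_ne_zero
  have hn : (n : ℂ) + 1 ≠ 0 := n.cast_add_one_ne_zero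
  have hpoch := ascPochhammer_eval_ne_zero hc n
  have hshift : (ascPochhammer ℂ n).eval (c + 1) = (ascPochhammer ℂ n).eval c * (c + n) / c := by
    rw [ascPochhammer_eval_mul_add_natCast, mul_div_cancel_left₀ _ hc₀]
  simp only [hypCoeff, hshift, ascPochhammer_succ_eval, Nat.factorial_succ, Nat.cast_mul,
    Nat.cast_succ]
  field_simp
  ring

theorem tsum_hypCoeff_eq_mul_tsum_add_one {a b c : ℂ} (hc : ∀ k : ℕ, c ≠ -k)
    (h : 0 < (c - a - b).re) :
    ∑' n, hypCoeff a b c n =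
      (c - a) * (c - b) / (c * (c - a - b)) * ∑' n, hypCoeff a b (c + 1) n := by
  have h' : 0 < (c + 1 - a - b).re := by
    simp only [sub_re, add_re, one_re] at h ⊢
    linarith
  have htel := ((summable_hypCoeff h).hasSum.mul_left (c - a - b)).sub
    ((summable_hypCoeff h').hasSum.mul_left ((c - a) * (c - b) / c))
  simp only [hypCoeff_contiguous a b hc] at htel
  have hzero := htel.tendsto_sum_nat
  simp only [Finset.sum_range_sub', Nat.cast_zero, zero_mul, zero_sub] at hzero
  have hlim := tendsto_nhds_unique hzero (by simpa using (tendsto_natCast_mul_hypCoeff h).neg)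
  have hc₀ : c ≠ 0 := by simpa using hc 0
  have hcab : c - a - b ≠ 0 := by simpa using ne_neg_natCast_of_re_pos h 0
  rw [sub_eq_zero] at hlim
  field_simp at hlim ⊢
  exact hlim

theorem tsum_hypCoeff_eq_mul_tsum_add_natCast {a b c : ℂ} (hc : ∀ k : ℕ, c ≠ -k)
    (h : 0 < (c - a - b).re) (N : ℕ) :
    ∑' n, hypCoeff a b c n =
      (ascPochhammer ℂ N).eval (c - a) * (ascPochhammer ℂ N).eval (c - b) /
        ((ascPochhammer ℂ N).eval c * (ascPochhammer ℂ N).eval (c - a - b)) *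
        ∑' n, hypCoeff a b (c + N) n := by
  induction N with
  | zero => simp
  | succ N ih =>
    have hcN : ∀ k : ℕ, c + N ≠ -k := fun k hk =>
      hc (N + k) (by push_cast; linear_combination hk)
    have hN : 0 < (c + N - a - b).re := by
      simp only [sub_re, add_re, natCast_re] at h ⊢
      linarith [N.cast_nonneg (α := ℝ)]
    rw [ih, tsum_hypCoeff_eq_mul_tsum_add_one hcN hN, ← mul_assoc, div_mul_div_comm,
      Nat.cast_succ, add_assoc c]
    simp only [ascPochhammer_succ_eval]
    ring_nf

theorem norm_ascPochhammer_eval_le_add_natCast {c : ℂ} (hc : 0 ≤ c.re) (N n : ℕ) :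
    ‖(ascPochhammer ℂ n).eval c‖ ≤ ‖(ascPochhammer ℂ n).eval (c + N)‖ := by
  simp only [ascPochhammer_eval_eq_prod_range, norm_prod]
  refine Finset.prod_le_prod (fun _ _ => norm_nonneg _) fun j _ => ?_
  refine abs_le_of_sq_le_sq' ?_ (norm_nonneg _) |>.2
  simp only [Complex.sq_norm, normSq_apply, add_re, add_im, natCast_re, natCast_im]
  nlinarith [N.cast_nonneg (α := ℝ), j.cast_nonneg (α := ℝ)]

theorem norm_hypCoeff_add_natCast_le (a b : ℂ) {c : ℂ} (hc : 0 < c.re) (N n : ℕ) :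
    ‖hypCoeff a b (c + N) n‖ ≤ ‖hypCoeff a b c n‖ := by
  have hpoch := norm_pos_iff.2 (ascPochhammer_eval_ne_zero (ne_neg_natCast_of_re_pos hc) n)
  have hfac : 0 < ‖(n.factorial : ℂ)‖ := norm_pos_iff.2 (Nat.cast_ne_zero.2 n.factorial_ne_zero)
  simp only [hypCoeff, norm_div, norm_mul]
  exact div_le_div_of_nonneg_left (by positivity) (mul_pos hpoch hfac)
    (mul_le_mul_of_nonneg_right (norm_ascPochhammer_eval_le_add_natCast hc.le N n) hfac.le)

theorem tendsto_hypCoeff_add_natCast (a b c : ℂ) (n : ℕ) :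
    Tendsto (fun N : ℕ => hypCoeff a b (c + N) n) atTop (𝓝 (if n = 0 then 1 else 0)) := by
  rcases n.eq_zero_or_pos with rfl | hn
  · simp [hypCoeff]
  have hdeg : 0 < (ascPochhammer ℂ n).degree := by
    rwa [← Polynomial.natDegree_pos_iff_degree_pos, ascPochhammer_natDegree]
  have hc : Tendsto (fun N : ℕ => ‖c + N‖) atTop atTop :=
    tendsto_norm_cobounded_atTop.comp <| (tendsto_const_add_cobounded c).comp
      tendsto_natCast_atTop_cobounded
  have hpoch := Polynomial.tendsto_norm_atTop _ hdeg hc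
  rw [if_neg hn.ne', tendsto_zero_iff_norm_tendsto_zero]
  simp only [hypCoeff, norm_div, norm_mul]
  exact (hpoch.atTop_mul_const
    (norm_pos_iff.2 (Nat.cast_ne_zero.2 n.factorial_ne_zero))).const_div_atTop _

theorem tendsto_tsum_hypCoeff_add_natCast {a b c : ℂ} (hc : 0 < c.re) (h : 0 < (c - a - b).re) :
    Tendsto (fun N : ℕ => ∑' n, hypCoeff a b (c + N) n) atTop (𝓝 1) := by
  rw [← tsum_ite_eq (0 : ℕ) (fun _ => (1 : ℂ))]
  exact tendsto_tsum_of_dominated_convergence (summable_hypCoeff h).norm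
    (tendsto_hypCoeff_add_natCast a b c)
    (.of_forall fun N n => norm_hypCoeff_add_natCast_le a b hc N n)

theorem hasSum_hypCoeff {a b c : ℂ} (hc : 0 < c.re) (h : 0 < (c - a - b).re) :
    HasSum (hypCoeff a b c) (Gamma c * Gamma (c - a - b) / (Gamma (c - a) * Gamma (c - b))) := by
  have hprefactor := tendsto_cpow_mul_ascPochhammer_ratio (c - a) (c - b) c (c - a - b)
  simp only [show c + (c - a - b) - (c - a) - (c - b) = 0 by ring, cpow_zero, one_mul]
    at hprefactor
  have hlim := hprefactor.mul (tendsto_tsum_hypCoeff_add_natCast hc h)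
  simp only [← tsum_hypCoeff_eq_mul_tsum_add_natCast (ne_neg_natCast_of_re_pos hc) h,
    mul_one] at hlim
  exact tendsto_nhds_unique tendsto_const_nhds hlim ▸ (summable_hypCoeff h).hasSum

/-! ### Termwise integration of power series -/

theorem hasSum_ascPochhammer_div_factorial_mul_pow (d : ℝ) {x : ℝ} (hx : |x| < 1) :
    HasSum (fun n : ℕ => (ascPochhammer ℝ n).eval d / n.factorial * x ^ n) ((1 - x) ^ (-d)) := by
  have hx₀ : 0 ≤ 1 - x := sub_nonneg.2 (abs_lt.1 hx).2.le
  have h := (Real.one_div_one_sub_rpow_hasFPowerSeriesOnBall_zero d).hasSum (y := x)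
    (by simpa [enorm_eq_nnnorm, ← NNReal.coe_lt_one] using hx)
  rw [zero_add, one_div, ← Real.rpow_neg hx₀] at h
  refine h.congr_fun fun n => ?_
  have hchoose := Ring.factorial_nsmul_multichoose_eq_ascPochhammer d n
  rw [Polynomial.ascPochhammer_smeval_eq_eval, nsmul_eq_mul, Ring.multichoose_eq] at hchoose
  rw [← hchoose, mul_div_cancel_left₀ _ (Nat.cast_ne_zero.2 n.factorial_ne_zero)]
  simp [mul_comm]

section Majorized

variable {A : ℕ → ℂ} {C d : ℝ}

theorem norm_mul_pow_le (hA : ∀ n, ‖A n‖ ≤ C * ((ascPochhammer ℝ n).eval d / n.factorial))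
    {r : ℝ} (hr : 0 ≤ r) (n : ℕ) :
    ‖A n * (r : ℂ) ^ n‖ ≤ C * ((ascPochhammer ℝ n).eval d / n.factorial * r ^ n) := by
  rw [norm_mul, norm_pow, norm_real, Real.norm_of_nonneg hr, ← mul_assoc]
  exact mul_le_mul_of_nonneg_right (hA n) (pow_nonneg hr n)

theorem hasSum_majorant (C d : ℝ) {r : ℝ} (hr : r ∈ Ico 0 1) :
    HasSum (fun n : ℕ => C * ((ascPochhammer ℝ n).eval d / n.factorial * r ^ n))
      (C * (1 - r) ^ (-d)) :=
  (hasSum_ascPochhammer_div_factorial_mul_pow d (by rw [abs_of_nonneg hr.1]; exact hr.2)).mul_left C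

theorem summable_mul_pow (hA : ∀ n, ‖A n‖ ≤ C * ((ascPochhammer ℝ n).eval d / n.factorial))
    {r : ℝ} (hr : r ∈ Ico 0 1) : Summable fun n => A n * (r : ℂ) ^ n :=
  .of_norm_bounded (hasSum_majorant C d hr).summable (norm_mul_pow_le hA hr.1)

theorem norm_tsum_mul_pow_le (hA : ∀ n, ‖A n‖ ≤ C * ((ascPochhammer ℝ n).eval d / n.factorial))
    {r : ℝ} (hr : r ∈ Ico 0 1) : ‖∑' n, A n * (r : ℂ) ^ n‖ ≤ C * (1 - r) ^ (-d) :=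
  tsum_of_norm_bounded (hasSum_majorant C d hr) (norm_mul_pow_le hA hr.1)

variable {X : Type*} [MeasurableSpace X] {μ : Measure X} {r : X → ℝ} {g : X → ℂ}

theorem aestronglyMeasurable_tsum_mul_pow
    (hA : ∀ n, ‖A n‖ ≤ C * ((ascPochhammer ℝ n).eval d / n.factorial))
    (hrm : AEStronglyMeasurable r μ) (hr : ∀ᵐ x ∂μ, r x ∈ Ico 0 1) :
    AEStronglyMeasurable (fun x => ∑' n, A n * (r x : ℂ) ^ n) μ := by
  refine aestronglyMeasurable_of_tendsto_ae atTop
    (f := fun N x => ∑ n ∈ Finset.range N, A n * (r x : ℂ) ^ n) (fun N => ?_) ?_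
  · exact (by fun_prop : Continuous fun y : ℝ =>
      ∑ n ∈ Finset.range N, A n * (y : ℂ) ^ n).comp_aestronglyMeasurable hrm
  · filter_upwards [hr] with x hx
    exact (summable_mul_pow hA hx).hasSum.tendsto_sum_nat

theorem integrable_tsum_mul_pow_mul
    (hA : ∀ n, ‖A n‖ ≤ C * ((ascPochhammer ℝ n).eval d / n.factorial))
    (hrm : AEStronglyMeasurable r μ) (hr : ∀ᵐ x ∂μ, r x ∈ Ico 0 1)
    (hgm : AEStronglyMeasurable g μ) (hg : Integrable (fun x => (1 - r x) ^ (-d) * ‖g x‖) μ) :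
    Integrable (fun x => (∑' n, A n * (r x : ℂ) ^ n) * g x) μ := by
  refine (hg.const_mul C).mono' ((aestronglyMeasurable_tsum_mul_pow hA hrm hr).mul hgm) ?_
  filter_upwards [hr] with x hx
  rw [norm_mul, ← mul_assoc]
  exact mul_le_mul_of_nonneg_right (norm_tsum_mul_pow_le hA hx) (norm_nonneg _)

theorem hasSum_integral_tsum_mul_pow_mul
    (hA : ∀ n, ‖A n‖ ≤ C * ((ascPochhammer ℝ n).eval d / n.factorial))
    (hrm : AEStronglyMeasurable r μ) (hr : ∀ᵐ x ∂μ, r x ∈ Ico 0 1)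
    (hgm : AEStronglyMeasurable g μ) (hg : Integrable (fun x => (1 - r x) ^ (-d) * ‖g x‖) μ) :
    HasSum (fun n => A n * ∫ x, (r x : ℂ) ^ n * g x ∂μ)
      (∫ x, (∑' n, A n * (r x : ℂ) ^ n) * g x ∂μ) := by
  simp only [← integral_const_mul, ← mul_assoc]
  refine hasSum_integral_of_dominated_convergence
    (fun n x => C * ((ascPochhammer ℝ n).eval d / n.factorial * r x ^ n) * ‖g x‖)
    (fun n => ?_) (fun n => ?_) ?_ ?_ ?_
  · exact ((by fun_prop : Continuous fun y : ℝ =>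
      A n * (y : ℂ) ^ n).comp_aestronglyMeasurable hrm).mul hgm
  · filter_upwards [hr] with x hx
    rw [norm_mul]
    exact mul_le_mul_of_nonneg_right (norm_mul_pow_le hA hx.1 n) (norm_nonneg _)
  · filter_upwards [hr] with x hx
    exact (hasSum_majorant C d hx).summable.mul_right _
  · refine (hg.const_mul C).congr ?_
    filter_upwards [hr] with x hx
    rw [((hasSum_majorant C d hx).mul_right _).tsum_eq, mul_assoc]
  · filter_upwards [hr] with x hx
    exact (summable_mul_pow hA hx).hasSum.mul_right _

theorem integrable_hyp_mul {a b c : ℂ} (hd : 0 < d) (h : (a + b - c).re ≤ d)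
    (hrm : AEStronglyMeasurable r μ) (hr : ∀ᵐ x ∂μ, r x ∈ Ico 0 1)
    (hgm : AEStronglyMeasurable g μ) (hg : Integrable (fun x => (1 - r x) ^ (-d) * ‖g x‖) μ) :
    Integrable (fun x => hyp a b c (r x) * g x) μ :=
  have ⟨_, hC⟩ := exists_norm_hypCoeff_le hd h
  integrable_tsum_mul_pow_mul hC hrm hr hgm hg

theorem hasSum_integral_hyp_mul {a b c : ℂ} (hd : 0 < d) (h : (a + b - c).re ≤ d)
    (hrm : AEStronglyMeasurable r μ) (hr : ∀ᵐ x ∂μ, r x ∈ Ico 0 1)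
    (hgm : AEStronglyMeasurable g μ) (hg : Integrable (fun x => (1 - r x) ^ (-d) * ‖g x‖) μ) :
    HasSum (fun n => hypCoeff a b c n * ∫ x, (r x : ℂ) ^ n * g x ∂μ)
      (∫ x, hyp a b c (r x) * g x ∂μ) :=
  have ⟨_, hC⟩ := exists_norm_hypCoeff_le hd h
  hasSum_integral_tsum_mul_pow_mul hC hrm hr hgm hg

end Majorized

/-! ### Beta integrals -/

theorem norm_cpow_mul_one_sub_cpow {u v : ℂ} {x : ℝ} (hx : x ∈ Ioo 0 1) :
    ‖(x : ℂ) ^ u * (1 - (x : ℂ)) ^ v‖ = x ^ u.re * (1 - x) ^ v.re := by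
  rw [norm_mul, norm_cpow_eq_rpow_re_of_pos hx.1, ← ofReal_one, ← ofReal_sub,
    norm_cpow_eq_rpow_re_of_pos (sub_pos.2 hx.2)]

theorem integrableOn_cpow_mul_one_sub_cpow {u v : ℂ} (hu : 0 < u.re) (hv : 0 < v.re) :
    IntegrableOn (fun x : ℝ => (x : ℂ) ^ (u - 1) * (1 - (x : ℂ)) ^ (v - 1)) (Ioo 0 1) := by
  rw [← intervalIntegrable_iff_integrableOn_Ioo_of_le zero_le_one]
  exact betaIntegral_convergent hu hv

theorem integrableOn_rpow_mul_one_sub_rpow {u v : ℝ} (hu : 0 < u) (hv : 0 < v) :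
    IntegrableOn (fun x : ℝ => x ^ (u - 1) * (1 - x) ^ (v - 1)) (Ioo 0 1) := by
  have hnorm := (integrableOn_cpow_mul_one_sub_cpow (u := u) (v := v) hu hv).norm
  refine hnorm.congr ?_
  filter_upwards [ae_restrict_mem measurableSet_Ioo] with x hx
  rw [norm_cpow_mul_one_sub_cpow hx]
  simp

theorem setIntegral_cpow_mul_one_sub_cpow {u v : ℂ} (hu : 0 < u.re) (hv : 0 < v.re) :
    ∫ x in Ioo (0 : ℝ) 1, (x : ℂ) ^ (u - 1) * (1 - (x : ℂ)) ^ (v - 1) =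
      Gamma u * Gamma v / Gamma (u + v) := by
  rw [← betaIntegral_eq_Gamma_mul_div u v hu hv, betaIntegral,
    intervalIntegral.integral_of_le zero_le_one, integral_Ioc_eq_integral_Ioo]

theorem pow_mul_cpow_sub_one {z : ℂ} (hz : z ≠ 0) (u : ℂ) (n : ℕ) :
    z ^ n * z ^ (u - 1) = z ^ (u + n - 1) := by
  rw [← cpow_natCast, ← cpow_add _ _ hz]
  congr 1
  ring

theorem re_add_natCast_pos {u : ℂ} (hu : 0 < u.re) (n : ℕ) : 0 < (u + n).re := by
  simpa only [add_re, natCast_re] using add_pos_of_pos_of_nonneg hu n.cast_nonneg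

theorem setIntegral_pow_mul_cpow_mul_one_sub_cpow {u v : ℂ} (hu : 0 < u.re) (hv : 0 < v.re)
    (n : ℕ) :
    ∫ x in Ioo (0 : ℝ) 1, (x : ℂ) ^ n * ((x : ℂ) ^ (u - 1) * (1 - (x : ℂ)) ^ (v - 1)) =
      (ascPochhammer ℂ n).eval u / (ascPochhammer ℂ n).eval (u + v) *
        (Gamma u * Gamma v / Gamma (u + v)) := by
  have huv : 0 < (u + v).re := add_pos hu hv
  calc ∫ x in Ioo (0 : ℝ) 1, (x : ℂ) ^ n * ((x : ℂ) ^ (u - 1) * (1 - (x : ℂ)) ^ (v - 1))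
      = ∫ x in Ioo (0 : ℝ) 1, (x : ℂ) ^ (u + n - 1) * (1 - (x : ℂ)) ^ (v - 1) :=
        setIntegral_congr_fun measurableSet_Ioo fun x hx => by
          simp only [← mul_assoc, pow_mul_cpow_sub_one (ofReal_ne_zero.2 hx.1.ne')]
    _ = Gamma (u + n) * Gamma v / Gamma (u + v + n) := by
        rw [setIntegral_cpow_mul_one_sub_cpow (re_add_natCast_pos hu n) hv, add_right_comm]
    _ = _ := by
        rw [Gamma_add_natCast (ne_neg_natCast_of_re_pos hu),
          Gamma_add_natCast (ne_neg_natCast_of_re_pos huv), mul_assoc, mul_div_mul_comm]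

/-! ### Integrals of products of hypergeometric functions -/

theorem rpow_mul_rpow_mul_norm_cpow_mul_cpow (u v : ℂ) (d e : ℝ) {y : ℝ} (hy : y ∈ Ioo 0 1) :
    y ^ (-e) * ((1 - y) ^ (-d) * ‖(y : ℂ) ^ (u - 1) * (1 - (y : ℂ)) ^ (v - 1)‖) =
      y ^ (u.re - e - 1) * (1 - y) ^ (v.re - d - 1) := by
  rw [norm_cpow_mul_one_sub_cpow hy,
    show ∀ p q r s : ℝ, p * (q * (r * s)) = (p * r) * (q * s) by intros; ring,
    ← Real.rpow_add hy.1, ← Real.rpow_add (sub_pos.2 hy.2)]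
  simp only [sub_re, one_re]
  ring_nf

theorem integrableOn_rpow_mul_rpow_mul_norm_cpow_mul_cpow {u v : ℂ} {d e : ℝ} (hu : e < u.re)
    (hv : d < v.re) :
    IntegrableOn (fun y : ℝ =>
      y ^ (-e) * ((1 - y) ^ (-d) * ‖(y : ℂ) ^ (u - 1) * (1 - (y : ℂ)) ^ (v - 1)‖)) (Ioo 0 1) :=
  (integrableOn_rpow_mul_one_sub_rpow (sub_pos.2 hu) (sub_pos.2 hv)).congr_fun
    (fun _ hy => (rpow_mul_rpow_mul_norm_cpow_mul_cpow u v d e hy).symm) measurableSet_Ioo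

theorem aestronglyMeasurable_cpow_mul_one_sub_cpow (u v : ℂ) (μ : Measure ℝ) :
    AEStronglyMeasurable (fun y : ℝ => (y : ℂ) ^ u * (1 - (y : ℂ)) ^ v) μ := by
  exact (by fun_prop : Measurable _).aestronglyMeasurable

theorem ae_restrict_mem_Ico : ∀ᵐ y : ℝ ∂volume.restrict (Ioo 0 1), y ∈ Ico 0 1 := by
  filter_upwards [ae_restrict_mem measurableSet_Ioo] with y hy using Ioo_subset_Ico_self hy

theorem aestronglyMeasurable_hyp (a b c : ℂ) :
    AEStronglyMeasurable (fun y : ℝ => hyp a b c y) (volume.restrict (Ioo 0 1)) := by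
  obtain ⟨C, hC⟩ := exists_norm_hypCoeff_le (lt_max_of_lt_right one_pos)
    (le_max_left (a + b - c).re 1)
  exact aestronglyMeasurable_tsum_mul_pow hC aestronglyMeasurable_id ae_restrict_mem_Ico

theorem setIntegral_hyp_mul_cpow {a b c s : ℂ} (hc : 0 < c.re) (hs : 0 < s.re)
    (h : 0 < (s + c - a - b).re) :
    ∫ y in Ioo (0 : ℝ) 1, hyp a b c y * ((y : ℂ) ^ (c - 1) * (1 - (y : ℂ)) ^ (s - 1)) =
      Gamma s * Gamma c * Gamma (s + c - a - b) / (Gamma (s + c - a) * Gamma (s + c - b)) := by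
  have hsc : 0 < (s + c).re := add_pos hs hc
  obtain ⟨d, hd, hds⟩ : ∃ d, max (a + b - c).re 0 < d ∧ d < s.re :=
    exists_between (max_lt (by simp only [sub_re, add_re] at h ⊢; linarith) hs)
  have hint := integrableOn_rpow_mul_rpow_mul_norm_cpow_mul_cpow (e := 0) hc hds
  simp only [neg_zero, Real.rpow_zero, one_mul] at hint
  refine (hasSum_integral_hyp_mul (max_lt_iff.1 hd).2 (max_lt_iff.1 hd).1.le
    aestronglyMeasurable_id ae_restrict_mem_Ico (aestronglyMeasurable_cpow_mul_one_sub_cpow _ _ _)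
    hint).unique ?_
  have hvalue : Gamma s * Gamma c * Gamma (s + c - a - b) /
        (Gamma (s + c - a) * Gamma (s + c - b)) = Gamma c * Gamma s / Gamma (s + c) *
      (Gamma (s + c) * Gamma (s + c - a - b) / (Gamma (s + c - a) * Gamma (s + c - b))) := by
    have hGsc := Gamma_ne_zero_of_re_pos hsc
    field_simp
  rw [hvalue]
  refine ((hasSum_hypCoeff hsc h).mul_left _).congr_fun fun n => ?_
  have hcn := ascPochhammer_eval_ne_zero (ne_neg_natCast_of_re_pos hc) n
  simp only [id_eq, setIntegral_pow_mul_cpow_mul_one_sub_cpow hc hs, hypCoeff, add_comm c s]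
  field_simp

theorem integrableOn_rpow_mul_norm_hyp_mul_cpow {a b c s : ℂ} {e : ℝ} (he : e < c.re)
    (hs : 0 < s.re) (h : 0 < (s + c - a - b).re) :
    IntegrableOn (fun y : ℝ =>
      y ^ (-e) * ‖hyp a b c y * ((y : ℂ) ^ (c - 1) * (1 - (y : ℂ)) ^ (s - 1))‖) (Ioo 0 1) := by
  obtain ⟨d, hd, hds⟩ : ∃ d, max (a + b - c).re 0 < d ∧ d < s.re :=
    exists_between (max_lt (by simp only [sub_re, add_re] at h ⊢; linarith) hs)
  obtain ⟨C, hC⟩ := exists_norm_hypCoeff_le (c := c) (max_lt_iff.1 hd).2 (max_lt_iff.1 hd).1.le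
  refine ((integrableOn_rpow_mul_rpow_mul_norm_cpow_mul_cpow he hds).const_mul C).mono' ?_ ?_
  · have hrpow : Measurable fun y : ℝ => y ^ (-e) := by fun_prop
    exact hrpow.aestronglyMeasurable.mul ((aestronglyMeasurable_hyp a b c).mul
      (aestronglyMeasurable_cpow_mul_one_sub_cpow _ _ _)).norm
  · filter_upwards [ae_restrict_mem measurableSet_Ioo] with y hy
    have hye := Real.rpow_nonneg hy.1.le (-e)
    have hhyp : ‖hyp a b c y‖ ≤ C * (1 - y) ^ (-d) :=
      norm_tsum_mul_pow_le hC (Ioo_subset_Ico_self hy)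
    rw [Real.norm_of_nonneg (by positivity), norm_mul, mul_left_comm C, ← mul_assoc C]
    gcongr

theorem setIntegral_pow_mul_hyp_mul_cpow {a b c s t : ℂ} (hc : 0 < c.re) (hs : 0 < s.re)
    (ht : 0 < t.re) (h : a + b + t = s + c) (hat : ∀ k : ℕ, a + t ≠ -k)
    (hbt : ∀ k : ℕ, b + t ≠ -k) (n : ℕ) :
    ∫ y in Ioo (0 : ℝ) 1,
        (1 - (y : ℂ)) ^ n * (hyp a b c y * ((y : ℂ) ^ (c - 1) * (1 - (y : ℂ)) ^ (s - 1))) =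
      (ascPochhammer ℂ n).eval s * (ascPochhammer ℂ n).eval t /
        ((ascPochhammer ℂ n).eval (b + t) * (ascPochhammer ℂ n).eval (a + t)) *
        (Gamma s * Gamma c * Gamma t / (Gamma (b + t) * Gamma (a + t))) := by
  have htn : s + n + c - a - b = t + n := by linear_combination -h
  calc ∫ y in Ioo (0 : ℝ) 1,
        (1 - (y : ℂ)) ^ n * (hyp a b c y * ((y : ℂ) ^ (c - 1) * (1 - (y : ℂ)) ^ (s - 1)))
      = ∫ y in Ioo (0 : ℝ) 1,
          hyp a b c y * ((y : ℂ) ^ (c - 1) * (1 - (y : ℂ)) ^ (s + n - 1)) :=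
        setIntegral_congr_fun measurableSet_Ioo fun y hy => by
          have hy₁ : 1 - (y : ℂ) ≠ 0 := sub_ne_zero.2 (ofReal_ne_one.2 hy.2.ne).symm
          simp only [← pow_mul_cpow_sub_one hy₁]
          ring
    _ = Gamma (s + n) * Gamma c * Gamma (t + n) / (Gamma (b + t + n) * Gamma (a + t + n)) := by
        rw [setIntegral_hyp_mul_cpow hc (re_add_natCast_pos hs n)
          (htn ▸ re_add_natCast_pos ht n), htn,
          show s + n + c - a = b + t + n by linear_combination -h,
          show s + n + c - b = a + t + n by linear_combination -h]
    _ = _ := by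
        rw [Gamma_add_natCast hat, Gamma_add_natCast hbt,
          Gamma_add_natCast (ne_neg_natCast_of_re_pos hs),
          Gamma_add_natCast (ne_neg_natCast_of_re_pos ht), div_mul_div_comm]
        ring

theorem hasSum_hypCoeff_one_add_add {s t : ℂ} (hs : 0 < s.re) (ht : 0 < t.re) :
    HasSum (hypCoeff s t (1 + s + t))
      (Gamma (1 + s + t) / (s * t * (Gamma s * Gamma t))) := by
  have hone : 1 + s + t - s - t = 1 := by ring
  have hgauss := hasSum_hypCoeff (a := s) (b := t) (c := 1 + s + t)
    (by simp only [add_re, one_re]; positivity) (by rw [hone]; exact one_pos)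
  rw [hone, show 1 + s + t - s = t + 1 by ring,
    show 1 + s + t - t = s + 1 by ring, Gamma_one, mul_one,
    Gamma_add_one s (by simpa using ne_neg_natCast_of_re_pos hs 0),
    Gamma_add_one t (by simpa using ne_neg_natCast_of_re_pos ht 0)] at hgauss
  convert hgauss using 2
  ring

theorem hasSum_hypCoeff_mul_setIntegral {a b c s t : ℂ} (hc : 0 < c.re) (hs : 0 < s.re)
    (ht : 0 < t.re) (h : a + b + t = s + c) (hat : ∀ k : ℕ, a + t ≠ -k)
    (hbt : ∀ k : ℕ, b + t ≠ -k) :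
    HasSum (fun n => hypCoeff (b + t) (a + t) (1 + s + t) n * ∫ y in Ioo (0 : ℝ) 1,
        (1 - (y : ℂ)) ^ n * (hyp a b c y * ((y : ℂ) ^ (c - 1) * (1 - (y : ℂ)) ^ (s - 1))))
      (Gamma c * Gamma (1 + s + t) / (Gamma (b + t) * Gamma (a + t) * (s * t))) := by
  have hvalue : Gamma c * Gamma (1 + s + t) / (Gamma (b + t) * Gamma (a + t) * (s * t)) =
      Gamma s * Gamma c * Gamma t / (Gamma (b + t) * Gamma (a + t)) *
        (Gamma (1 + s + t) / (s * t * (Gamma s * Gamma t))) := by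
    have hGs := Gamma_ne_zero_of_re_pos hs
    have hGt := Gamma_ne_zero_of_re_pos ht
    field_simp
  rw [hvalue]
  refine ((hasSum_hypCoeff_one_add_add hs ht).mul_left _).congr_fun fun n => ?_
  have han := ascPochhammer_eval_ne_zero hat n
  have hbn := ascPochhammer_eval_ne_zero hbt n
  rw [setIntegral_pow_mul_hyp_mul_cpow hc hs ht h hat hbt, hypCoeff, hypCoeff, ← mul_assoc,
    mul_comm (_ / _) (_ / _), div_mul_div_cancel₀ (mul_ne_zero hbn han), mul_comm]

theorem integrableOn_and_setIntegral_hyp_mul_hyp {a b c s t : ℂ} (hc : 0 < c.re)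
    (hs : 0 < s.re) (ht : 0 < t.re) (h : a + b + t = s + c) (hat : ∀ k : ℕ, a + t ≠ -k)
    (hbt : ∀ k : ℕ, b + t ≠ -k) :
    IntegrableOn (fun y : ℝ => hyp (b + t) (a + t) (1 + s + t) (1 - y : ℝ) *
      (hyp a b c y * ((y : ℂ) ^ (c - 1) * (1 - (y : ℂ)) ^ (s - 1)))) (Ioo 0 1) ∧
    ∫ y in Ioo (0 : ℝ) 1, hyp (b + t) (a + t) (1 + s + t) (1 - y : ℝ) *
      (hyp a b c y * ((y : ℂ) ^ (c - 1) * (1 - (y : ℂ)) ^ (s - 1))) =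
      Gamma c * Gamma (1 + s + t) / (Gamma (b + t) * Gamma (a + t) * (s * t)) := by
  have hre : (s + c - a - b).re = t.re := by rw [show s + c - a - b = t by linear_combination -h]
  have hexp : (b + t + (a + t) - (1 + s + t)).re = c.re - 1 := by
    rw [show b + t + (a + t) - (1 + s + t) = c - 1 by linear_combination h, sub_re, one_re]
  obtain ⟨e, he, hec⟩ : ∃ e, max (c.re - 1) 0 < e ∧ e < c.re :=
    exists_between (max_lt (sub_one_lt _) hc)
  have hce : (b + t + (a + t) - (1 + s + t)).re ≤ e := hexp.trans_le (max_lt_iff.1 he).1.le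
  have hr : ∀ᵐ y : ℝ ∂volume.restrict (Ioo 0 1), 1 - y ∈ Ico 0 1 := by
    filter_upwards [ae_restrict_mem measurableSet_Ioo] with y hy
    exact ⟨sub_nonneg.2 hy.2.le, sub_lt_self _ hy.1⟩
  have hweight : IntegrableOn (fun y : ℝ => (1 - (1 - y)) ^ (-e) *
      ‖hyp a b c y * ((y : ℂ) ^ (c - 1) * (1 - (y : ℂ)) ^ (s - 1))‖) (Ioo 0 1) := by
    simpa only [sub_sub_cancel] using
      integrableOn_rpow_mul_norm_hyp_mul_cpow hec hs (hre ▸ ht)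
  have hone_sub : AEStronglyMeasurable (fun y : ℝ => 1 - y) (volume.restrict (Ioo 0 1)) := by
    fun_prop
  have hmeas : AEStronglyMeasurable
      (fun y : ℝ => hyp a b c y * ((y : ℂ) ^ (c - 1) * (1 - (y : ℂ)) ^ (s - 1)))
      (volume.restrict (Ioo 0 1)) :=
    (aestronglyMeasurable_hyp a b c).mul (aestronglyMeasurable_cpow_mul_one_sub_cpow _ _ _)
  refine ⟨integrable_hyp_mul (max_lt_iff.1 he).2 hce hone_sub hr hmeas hweight,
    (hasSum_integral_hyp_mul (max_lt_iff.1 he).2 hce hone_sub hr hmeas hweight).unique ?_⟩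
  simpa only [ofReal_sub, ofReal_one] using
    hasSum_hypCoeff_mul_setIntegral hc hs ht h hat hbt

/-! ### The substitution `y = tanh² t` -/

theorem inv_cosh_sq (t : ℝ) : (Real.cosh t ^ 2)⁻¹ = 1 - Real.tanh t ^ 2 := by
  have hcosh := (Real.cosh_pos t).ne'
  rw [Real.tanh_eq_sinh_div_cosh, div_pow, Real.sinh_sq]
  field_simp
  ring

theorem tanh_pos {t : ℝ} (ht : 0 < t) : 0 < Real.tanh t := by
  rw [Real.tanh_eq_sinh_div_cosh]
  exact div_pos (Real.sinh_pos_iff.2 ht) (Real.cosh_pos t)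

theorem hasDerivAt_tanh_sq (t : ℝ) :
    HasDerivAt (fun t => Real.tanh t ^ 2) (2 * Real.tanh t * (1 - Real.tanh t ^ 2)) t := by
  have hcosh := (Real.cosh_pos t).ne'
  have hquot := ((Real.hasDerivAt_sinh t).fun_div (Real.hasDerivAt_cosh t) hcosh).fun_pow 2
  simp only [← Real.tanh_eq_sinh_div_cosh] at hquot
  refine hquot.congr_deriv ?_
  rw [← inv_cosh_sq, ← sq, ← sq, Real.cosh_sq_sub_sinh_sq, one_div]
  simp

theorem injOn_tanh_sq : InjOn (fun t => Real.tanh t ^ 2) (Ioi 0) := fun _ ht _ hu htu =>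
  Real.tanh_injective
    ((pow_left_inj₀ (tanh_pos ht).le (tanh_pos hu).le two_ne_zero).1 htu)

theorem image_tanh_sq : (fun t => Real.tanh t ^ 2) '' Ioi 0 = Ioo 0 1 := by
  refine Subset.antisymm (image_subset_iff.2 fun t ht =>
    ⟨pow_pos (tanh_pos ht) 2, Real.tanh_sq_lt_one t⟩) fun y hy => ?_
  have hsqrt : √y ∈ Ioo 0 1 :=
    ⟨Real.sqrt_pos.2 hy.1, (Real.sqrt_lt' one_pos).2 (by simpa using hy.2)⟩
  refine ⟨Real.artanh √y, Real.artanh_pos hsqrt, ?_⟩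
  simp only [Real.tanh_artanh (Ioo_subset_Ioo_left (by norm_num) hsqrt), Real.sq_sqrt hy.1.le]

section ChangeOfVariables

variable {E : Type*} [NormedAddCommGroup E] [NormedSpace ℝ E] (f : ℝ → E)

theorem abs_deriv_tanh_sq {t : ℝ} (ht : t ∈ Ioi 0) :
    |2 * Real.tanh t * (1 - Real.tanh t ^ 2)| = 2 * Real.tanh t * (1 - Real.tanh t ^ 2) :=
  abs_of_pos (mul_pos (mul_pos two_pos (tanh_pos ht)) (sub_pos.2 (Real.tanh_sq_lt_one t)))

theorem integrableOn_Ioi_smul_comp_tanh_sq_iff :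
    IntegrableOn (fun t => (2 * Real.tanh t * (1 - Real.tanh t ^ 2)) • f (Real.tanh t ^ 2))
      (Ioi 0) ↔ IntegrableOn f (Ioo 0 1) := by
  rw [← image_tanh_sq, integrableOn_image_iff_integrableOn_abs_deriv_smul measurableSet_Ioi
    (fun t _ => (hasDerivAt_tanh_sq t).hasDerivWithinAt) injOn_tanh_sq]
  exact integrableOn_congr_fun (fun t ht => by simp only [abs_deriv_tanh_sq ht]) measurableSet_Ioi

theorem setIntegral_Ioi_smul_comp_tanh_sq :
    ∫ t in Ioi (0 : ℝ), (2 * Real.tanh t * (1 - Real.tanh t ^ 2)) • f (Real.tanh t ^ 2) =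
      ∫ y in Ioo (0 : ℝ) 1, f y := by
  rw [← image_tanh_sq, integral_image_eq_integral_abs_deriv_smul measurableSet_Ioi
    (fun t _ => (hasDerivAt_tanh_sq t).hasDerivWithinAt) injOn_tanh_sq]
  exact setIntegral_congr_fun measurableSet_Ioi fun t ht => by simp only [abs_deriv_tanh_sq ht]

end ChangeOfVariables

theorem ofReal_sq_cpow {r : ℝ} (hr : 0 < r) (z : ℂ) :
    ((r ^ 2 : ℝ) : ℂ) ^ z = (r : ℂ) ^ (2 * z) := by
  rw [sq, ofReal_mul, mul_cpow_ofReal_nonneg hr.le hr.le,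
    ← cpow_add _ _ (ofReal_ne_zero.2 hr.ne'), two_mul]

theorem ofReal_one_sub_tanh_sq_cpow (t : ℝ) (z : ℂ) :
    ((1 - Real.tanh t ^ 2 : ℝ) : ℂ) ^ z = (Real.cosh t : ℂ) ^ (-(2 * z)) := by
  have hcosh := Real.cosh_pos t
  rw [← inv_cosh_sq, ofReal_inv, inv_cpow _ _ (by
    rw [arg_ofReal_of_nonneg (sq_nonneg _)]; exact Real.pi_pos.ne), ofReal_sq_cpow hcosh, cpow_neg]

theorem Phi_eq (m₁ m₂ : ℕ) (l : ℂ) (t : ℝ) :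
    Phi m₁ m₂ l t = 2 ^ (I * l - rho m₁ m₂) *
      (((1 - Real.tanh t ^ 2 : ℝ) : ℂ) ^ ((rho m₁ m₂ - I * l) / 2) *
        hyp ((rho m₁ m₂ - I * l) / 2) ((m₁ + 2) / 4 - I * l / 2) (1 - I * l)
          (1 - Real.tanh t ^ 2 : ℝ)) := by
  rw [Phi, ofReal_one_sub_tanh_sq_cpow, ← ofReal_inv, inv_cosh_sq, ofReal_mul,
    mul_cpow_ofReal_nonneg two_pos.le (Real.cosh_pos t).le, ofReal_ofNat, mul_assoc,
    mul_div_cancel₀ _ two_ne_zero, neg_sub]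

theorem sph_eq (m₁ m₂ : ℕ) (ξ : ℂ) (t : ℝ) :
    sph m₁ m₂ ξ t = ((1 - Real.tanh t ^ 2 : ℝ) : ℂ) ^ ((rho m₁ m₂ + I * ξ) / 2) *
      hyp ((m₁ + 2) / 4 + I * ξ / 2) ((rho m₁ m₂ + I * ξ) / 2) ((m₁ + m₂ + 1) / 2)
        (Real.tanh t ^ 2 : ℝ) := by
  rw [sph, ofReal_one_sub_tanh_sq_cpow, mul_div_cancel₀ _ two_ne_zero]

theorem Del_eq_mul_tanh_pow (m₁ m₂ : ℕ) (t : ℝ) :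
    Del m₁ m₂ t = 2 ^ (m₁ + 2 * m₂) * Real.tanh t ^ (m₁ + m₂) * Real.cosh t ^ (m₁ + 2 * m₂) := by
  have hsinh : Real.sinh t = Real.tanh t * Real.cosh t := by
    rw [Real.tanh_eq_sinh_div_cosh, div_mul_cancel₀ _ (Real.cosh_pos t).ne']
  rw [Del, hsinh]
  ring

theorem ofReal_Del (m₁ m₂ : ℕ) {t : ℝ} (ht : 0 < t) :
    (Del m₁ m₂ t : ℂ) = 2 ^ (2 * rho m₁ m₂ - 1 : ℂ) *
      (((Real.tanh t ^ 2 : ℝ) : ℂ) ^ ((m₁ + m₂ + 1) / 2 - 1 : ℂ) *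
        ((1 - Real.tanh t ^ 2 : ℝ) : ℂ) ^ (-rho m₁ m₂ - 1 : ℂ)) *
      (2 * Real.tanh t * (1 - Real.tanh t ^ 2) : ℝ) := by
  have htanh : (Real.tanh t : ℂ) ≠ 0 := ofReal_ne_zero.2 (tanh_pos ht).ne'
  have hcosh : (Real.cosh t : ℂ) ≠ 0 := ofReal_ne_zero.2 (Real.cosh_pos t).ne'
  have hrho : (2 * rho m₁ m₂ : ℂ) = (m₁ + 2 * m₂ : ℕ) := by
    simp [rho, mul_div_cancel₀]
  have htwo_pow : (2 : ℂ) ^ (2 * rho m₁ m₂ - 1 : ℂ) = 2 ^ (m₁ + 2 * m₂) / 2 := by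
    rw [hrho, cpow_sub _ _ two_ne_zero, cpow_natCast, cpow_one]
  have htanh_pow : ((Real.tanh t ^ 2 : ℝ) : ℂ) ^ ((m₁ + m₂ + 1) / 2 - 1 : ℂ) =
      (Real.tanh t : ℂ) ^ (m₁ + m₂) / Real.tanh t := by
    rw [ofReal_sq_cpow (tanh_pos ht), show 2 * ((m₁ + m₂ + 1) / 2 - 1 : ℂ) =
      (m₁ + m₂ : ℕ) - 1 by push_cast; ring, cpow_sub _ _ htanh, cpow_natCast, cpow_one]
  have hcosh_pow : ((1 - Real.tanh t ^ 2 : ℝ) : ℂ) ^ (-rho m₁ m₂ - 1 : ℂ) =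
      (Real.cosh t : ℂ) ^ (m₁ + 2 * m₂) * Real.cosh t ^ 2 := by
    rw [ofReal_one_sub_tanh_sq_cpow, show -(2 * (-rho m₁ m₂ - 1 : ℂ)) =
      (m₁ + 2 * m₂ : ℕ) + (2 : ℕ) by push_cast at hrho ⊢; linear_combination hrho,
      cpow_add _ _ hcosh, cpow_natCast, cpow_natCast]
  rw [htwo_pow, htanh_pow, hcosh_pow, Del_eq_mul_tanh_pow, ← inv_cosh_sq]
  simp only [ofReal_mul, ofReal_pow, ofReal_inv, ofReal_ofNat]
  field_simp

/-- The integrand of the spherical transform of `b_l` at `ξ` in the coordinate `y = tanh² t`,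
divided by `transformConst`; the Jacobian `dy/dt` is not included. -/
def transformIntegrand (m₁ m₂ : ℕ) (l ξ : ℂ) (y : ℝ) : ℂ :=
  hyp ((rho m₁ m₂ - I * l) / 2) ((m₁ + 2) / 4 - I * l / 2) (1 - I * l) (1 - y : ℝ) *
    (hyp ((m₁ + 2) / 4 + I * ξ / 2) ((rho m₁ m₂ + I * ξ) / 2) ((m₁ + m₂ + 1) / 2) y *
      ((y : ℂ) ^ ((m₁ + m₂ + 1) / 2 - 1 : ℂ) * (1 - (y : ℂ)) ^ (I * (ξ - l) / 2 - 1)))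

/-- The Gamma factor of `b_l` together with all powers of `2` in `b_l`, `φ_ξ` and `Δ`. -/
def transformConst (m₁ m₂ : ℕ) (l : ℂ) : ℂ :=
  4⁻¹ * (Gamma ((rho m₁ m₂ - I * l) / 2) * Gamma ((m₁ + 2) / 4 - I * l / 2) /
    (Gamma ((m₁ + m₂ + 1) / 2) * Gamma (1 - I * l)))

theorem bfun_mul_sph_mul_Del (m₁ m₂ : ℕ) (l ξ : ℂ) {t : ℝ} (ht : 0 < t) :
    bfun m₁ m₂ l t * sph m₁ m₂ ξ t * Del m₁ m₂ t = transformConst m₁ m₂ l *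
      ((2 * Real.tanh t * (1 - Real.tanh t ^ 2)) •
        transformIntegrand m₁ m₂ l ξ (Real.tanh t ^ 2)) := by
  have hone_sub : ((1 - Real.tanh t ^ 2 : ℝ) : ℂ) ≠ 0 :=
    ofReal_ne_zero.2 (sub_pos.2 (Real.tanh_sq_lt_one t)).ne'
  have hpow : (1 - (Real.tanh t ^ 2 : ℝ) : ℂ) ^ (I * (ξ - l) / 2 - 1) =
      ((1 - Real.tanh t ^ 2 : ℝ) : ℂ) ^ ((rho m₁ m₂ - I * l) / 2) *
        ((1 - Real.tanh t ^ 2 : ℝ) : ℂ) ^ ((rho m₁ m₂ + I * ξ) / 2) *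
        ((1 - Real.tanh t ^ 2 : ℝ) : ℂ) ^ (-rho m₁ m₂ - 1 : ℂ) := by
    rw [← cpow_add _ _ hone_sub, ← cpow_add _ _ hone_sub, ofReal_sub, ofReal_one]
    ring_nf
  have htwo : (2 : ℂ) ^ (-rho m₁ m₂ - 1 - I * l) * 2 ^ (I * l - rho m₁ m₂) *
      2 ^ (2 * rho m₁ m₂ - 1 : ℂ) = 4⁻¹ := by
    rw [← cpow_add _ _ two_ne_zero, ← cpow_add _ _ two_ne_zero,
      show -rho m₁ m₂ - 1 - I * l + (I * l - rho m₁ m₂) + (2 * rho m₁ m₂ - 1) = -(2 : ℕ) by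
        push_cast; ring, cpow_neg, cpow_natCast]
    norm_num
  rw [bfun, Phi_eq, sph_eq, ofReal_Del m₁ m₂ ht, transformConst, transformIntegrand, hpow,
    real_smul, ← htwo]
  ring

section Parameters

variable (m₁ m₂ : ℕ) {l : ℂ}

theorem rho_nonneg : 0 ≤ rho m₁ m₂ := by
  rw [rho]
  positivity

theorem re_natCast_add_natCast_add_one_div_two_pos : 0 < ((m₁ + m₂ + 1) / 2 : ℂ).re := by
  simp only [div_ofNat_re, add_re, natCast_re, one_re]
  positivity

theorem re_one_sub_I_mul_pos (hl : 0 < l.im) : 0 < (1 - I * l).re := by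
  simp only [sub_re, one_re, I_mul_re, sub_neg_eq_add]
  positivity

theorem re_rho_sub_I_mul_div_two_pos (hl : 0 < l.im) : 0 < ((rho m₁ m₂ - I * l) / 2).re := by
  simpa using add_pos_of_nonneg_of_pos (rho_nonneg m₁ m₂) hl

theorem re_natCast_add_two_div_four_sub_pos (hl : 0 < l.im) :
    0 < ((m₁ + 2) / 4 - I * l / 2).re := by
  simp only [sub_re, div_ofNat_re, add_re, natCast_re, re_ofNat, I_mul_re, neg_div, sub_neg_eq_add]
  positivity

theorem transformConst_ne_zero (hl : 0 < l.im) : transformConst m₁ m₂ l ≠ 0 :=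
  mul_ne_zero (by norm_num) <| div_ne_zero
    (mul_ne_zero (Gamma_ne_zero_of_re_pos (re_rho_sub_I_mul_div_two_pos m₁ m₂ hl))
      (Gamma_ne_zero_of_re_pos (re_natCast_add_two_div_four_sub_pos m₁ hl)))
    (mul_ne_zero (Gamma_ne_zero_of_re_pos (re_natCast_add_natCast_add_one_div_two_pos m₁ m₂))
      (Gamma_ne_zero_of_re_pos (re_one_sub_I_mul_pos hl)))

end Parameters

theorem integrableOn_and_setIntegral_transformIntegrand (m₁ m₂ : ℕ) {l ξ : ℂ}
    (h : |ξ.im| < l.im) :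
    IntegrableOn (transformIntegrand m₁ m₂ l ξ) (Ioo 0 1) ∧
    ∫ y in Ioo (0 : ℝ) 1, transformIntegrand m₁ m₂ l ξ y =
      (transformConst m₁ m₂ l)⁻¹ / (ξ ^ 2 - l ^ 2) := by
  obtain ⟨hξ, hξ'⟩ := abs_lt.1 h
  have hl : 0 < l.im := (abs_nonneg _).trans_lt h
  have hs : 0 < (I * (ξ - l) / 2).re := by simpa using hξ'
  have ht : 0 < (-(I * (ξ + l) / 2)).re := by
    simp only [neg_re, div_ofNat_re, I_mul_re, add_im]
    linarith
  have hsum : (m₁ + 2) / 4 + I * ξ / 2 + (rho m₁ m₂ + I * ξ) / 2 + -(I * (ξ + l) / 2) =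
      I * (ξ - l) / 2 + (m₁ + m₂ + 1) / 2 := by
    rw [rho]; push_cast; ring
  have hbt : (rho m₁ m₂ + I * ξ) / 2 + -(I * (ξ + l) / 2) = (rho m₁ m₂ - I * l) / 2 := by ring
  have hat : (m₁ + 2) / 4 + I * ξ / 2 + -(I * (ξ + l) / 2) = (m₁ + 2) / 4 - I * l / 2 := by ring
  have hst : 1 + I * (ξ - l) / 2 + -(I * (ξ + l) / 2) = 1 - I * l := by ring
  have hmul : I * (ξ - l) / 2 * -(I * (ξ + l) / 2) = 4⁻¹ * (ξ ^ 2 - l ^ 2) := by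
    linear_combination (l ^ 2 - ξ ^ 2) / 4 * I_sq
  have hmain := integrableOn_and_setIntegral_hyp_mul_hyp
    (re_natCast_add_natCast_add_one_div_two_pos m₁ m₂) hs ht hsum
    (hat ▸ ne_neg_natCast_of_re_pos (re_natCast_add_two_div_four_sub_pos m₁ hl))
    (hbt ▸ ne_neg_natCast_of_re_pos (re_rho_sub_I_mul_div_two_pos m₁ m₂ hl))
  rw [hbt, hat, hst, hmul] at hmain
  refine ⟨hmain.1, hmain.2.trans ?_⟩
  simp only [transformConst, div_eq_mul_inv, mul_inv, inv_inv]
  ring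

theorem stmt5_general (m₁ m₂ : ℕ) (l ξ : ℂ) (h : |ξ.im| < l.im) :
    IntegrableOn (fun t : ℝ => bfun m₁ m₂ l t * sph m₁ m₂ ξ t * Del m₁ m₂ t) (Ioi 0) ∧
    ∫ t in Ioi (0 : ℝ), bfun m₁ m₂ l t * sph m₁ m₂ ξ t * Del m₁ m₂ t = 1 / (ξ ^ 2 - l ^ 2) := by
  obtain ⟨hint, hval⟩ := integrableOn_and_setIntegral_transformIntegrand m₁ m₂ h
  have hconst := transformConst_ne_zero m₁ m₂ ((abs_nonneg _).trans_lt h)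
  refine ⟨IntegrableOn.congr_fun
    (((integrableOn_Ioi_smul_comp_tanh_sq_iff _).2 hint).const_mul (transformConst m₁ m₂ l))
    (fun t ht => (bfun_mul_sph_mul_Del m₁ m₂ l ξ ht).symm) measurableSet_Ioi, ?_⟩
  rw [setIntegral_congr_fun measurableSet_Ioi fun t ht => bfun_mul_sph_mul_Del m₁ m₂ l ξ ht,
    integral_const_mul, setIntegral_Ioi_smul_comp_tanh_sq (transformIntegrand m₁ m₂ l ξ), hval,
    ← mul_div_assoc, mul_inv_cancel₀ hconst]

theorem stmt5 (m₁ m₂ : ℕ) (hm₁ : 1 ≤ m₁) (l : ℂ) (hl : 0 < l.im) (ξ : ℝ) :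
    IntegrableOn
      (fun t : ℝ => bfun m₁ m₂ l t * sph m₁ m₂ (ξ : ℂ) t * (Del m₁ m₂ t : ℂ))
      (Set.Ioi 0) ∧
    (∫ t in Set.Ioi (0 : ℝ), bfun m₁ m₂ l t * sph m₁ m₂ (ξ : ℂ) t * (Del m₁ m₂ t : ℂ)) =
      1 / ((ξ : ℂ) ^ 2 - l ^ 2) :=
  stmt5_general m₁ m₂ l ξ (by simpa using hl)

end
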